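/- Let G be a connected locally finite graph, φ a graph automorphism of G, and S ⊆ V(G) a set with φ(s) = s for every s ∈ S, such that the simple random walk started at any vertex of G visits S with probability 1. Then every bounded harmonic function h on G satisfies h(φ(v)) = h(v) for every vertex v. -/

import Mathlib

/-!
The function `g v = h (φ v) - h v` is bounded, harmonic (because `φ` is an automorphism) and
vanishes on `S` (because `φ` fixes `S` pointwise). Iterating the mean-value property until the
walk meets `S` gives `|g v| ≤ C * P v (X 0, …, X n ∉ S)` for every `n`
(`ofReal_abs_le_avoidProb`), and the right-hand side tends to `0` since the walk almost surely
visits `S`. Hence `g = 0`.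

The iteration is phrased with `avoidProb`, which is defined by first-step recursion; it is
identified with the avoidance probability under `P v` (`measure_avoid`) by expanding both as sums
over paths of length `n`, of which there are countably many since a connected locally finite
graph has countably many vertices.
-/


/-!
STATEMENT 13: Let G be a connected locally finite graph, φ a graph automorphism
of G, and S ⊆ V(G) a set fixed pointwise by φ, such that the simple random walk
started at any vertex visits S with probability 1.  Then every bounded harmonic
function h on G satisfies h(φ(v)) = h(v) for every vertex v.
-/

namespace Paper

open MeasureTheory Filter
open scoped Classical

variable {V : Type*}

/-- `h` is harmonic: at each vertex, `deg v · h v` equals the sum of `h` over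
the neighbours of `v`. -/
def Harmonic (G : SimpleGraph V) (h : V → ℝ) : Prop :=
  ∀ v, ((G.neighborSet v).ncard : ℝ) * h v = ∑ᶠ w ∈ G.neighborSet v, h w

/-- One-step transition probability of the simple random walk on `G`. -/
noncomputable def stepProb (G : SimpleGraph V) (u w : V) : ENNReal :=
  if G.Adj u w then ((G.neighborSet u).ncard : ENNReal)⁻¹ else 0

/-- `P` is the family of laws of the simple random walk on `G`: `P v` is a
probability measure on the trajectory space `ℕ → V` (with the product
σ-algebra) whose finite-dimensional cylinder probabilities are the products of
the one-step transition probabilities, started at `v`. -/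
def IsSRWLaw [MeasurableSpace V] (G : SimpleGraph V)
    (P : V → Measure (ℕ → V)) : Prop :=
  (∀ v, IsProbabilityMeasure (P v)) ∧
  ∀ (v : V) (n : ℕ) (x : ℕ → V),
    P v {ω | ∀ i ≤ n, ω i = x i} =
      if x 0 = v then ∏ i ∈ Finset.range n, stepProb G (x i) (x (i + 1)) else 0

/-- `h` is a sharp harmonic function: harmonic with values in `[0,1]`, and from
every vertex, almost surely `h (X n)` converges to `0` or to `1`. -/
def Sharp [MeasurableSpace V] (G : SimpleGraph V) (P : V → Measure (ℕ → V))
    (h : V → ℝ) : Prop :=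
  Harmonic G h ∧ (∀ v, h v ∈ Set.Icc (0 : ℝ) 1) ∧
  ∀ v, P v {ω | Tendsto (fun n => h (ω n)) atTop (nhds 0) ∨
               Tendsto (fun n => h (ω n)) atTop (nhds 1)} = 1

/-- The probability that the walk started at `v` avoids `S` at the times `0, …, n`, defined by
conditioning on the first step. -/
noncomputable def avoidProb (G : SimpleGraph V) (S : Set V) : ℕ → V → ENNReal
  | 0, v => if v ∈ S then 0 else 1
  | n + 1, v => if v ∈ S then 0 else ∑' w, stepProb G v w * avoidProb G S n w

/-- The contribution of the path `z 0, …, z n` to `avoidProb G S n v`. -/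
noncomputable def pathWeight (G : SimpleGraph V) (S : Set V) (n : ℕ) (v : V)
    (z : Fin (n + 1) → V) : ENNReal :=
  if z 0 = v ∧ ∀ i, z i ∉ S then ∏ i : Fin n, stepProb G (z i.castSucc) (z i.succ) else 0

lemma pathWeight_cons (G : SimpleGraph V) (S : Set V) (n : ℕ) (v u : V)
    (z : Fin (n + 1) → V) :
    pathWeight G S (n + 1) v (Fin.cons u z : Fin (n + 2) → V) =
      if u = v then
        (if v ∈ S then 0 else ∑' w, stepProb G v w * pathWeight G S n w z)
      else 0 := by
  by_cases huv : u = v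
  · subst huv
    by_cases hu : u ∈ S
    · have : ¬ ∀ i, (Fin.cons u z : Fin (n + 2) → V) i ∉ S := fun h => h 0 (by simpa using hu)
      simp [pathWeight, hu, this]
    · -- Only `w = z 0` contributes to the sum.
      rw [tsum_eq_single (z 0) (by
        intro w hw
        simp [pathWeight, hw.symm])]
      simp [pathWeight, hu, Fin.forall_fin_succ (n := n + 1), Fin.prod_univ_succ (n := n)]
  · simp [pathWeight, huv]

lemma avoidProb_eq_tsum (G : SimpleGraph V) (S : Set V) (n : ℕ) (v : V) :
    avoidProb G S n v = ∑' z : Fin (n + 1) → V, pathWeight G S n v z := by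
  induction n generalizing v with
  | zero =>
    rw [tsum_eq_single (fun _ => v) (by
      intro z hz
      have : z 0 ≠ v := fun h => hz (funext fun i => by rw [show i = 0 by omega, h])
      simp [pathWeight, this])]
    by_cases hv : v ∈ S <;> simp [avoidProb, pathWeight, hv]
  | succ n ih =>
    rw [← (Fin.consEquiv (fun _ : Fin (n + 2) => V)).tsum_eq, ENNReal.tsum_prod']
    simp only [Fin.consEquiv, Equiv.coe_fn_mk, pathWeight_cons]
    rw [tsum_eq_single v (by intro u hu; simp [hu])]
    by_cases hv : v ∈ S
    · simp [avoidProb, hv]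
    · simp only [avoidProb, hv, if_true, if_false, ih]
      rw [ENNReal.tsum_comm]
      simp_rw [ENNReal.tsum_mul_left]

lemma countable_of_connected {G : SimpleGraph V} (hconn : G.Connected)
    (hlf : ∀ v, (G.neighborSet v).Finite) : Countable V := by
  obtain ⟨v⟩ := hconn.nonempty
  have key : ∀ n : ℕ, {w | ∃ p : G.Walk w v, p.length = n}.Countable := by
    intro n
    induction n with
    | zero =>
      refine (Set.countable_singleton v).mono ?_
      rintro w ⟨p, hp⟩
      exact SimpleGraph.Walk.eq_of_length_eq_zero hp
    | succ n ih =>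
      refine (ih.biUnion fun w _ => (hlf w).countable).mono ?_
      rintro w ⟨p, hp⟩
      cases p with
      | nil => simp at hp
      | cons h p =>
        simp only [Set.mem_iUnion]
        exact ⟨_, ⟨p, by simpa using hp⟩, h.symm⟩
  refine Set.countable_univ_iff.1 ((Set.countable_iUnion key).mono ?_)
  intro w _
  obtain ⟨p⟩ := hconn.preconnected w v
  exact Set.mem_iUnion.2 ⟨_, p, rfl⟩

lemma measure_avoid [MeasurableSpace V] [Countable V] [MeasurableSingletonClass V]
    {G : SimpleGraph V} {P : V → Measure (ℕ → V)} (hP : IsSRWLaw G P) (S : Set V)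
    (n : ℕ) (v : V) :
    P v {ω | ∀ i ≤ n, ω i ∉ S} = avoidProb G S n v := by
  -- Partition the event into the cylinders of its initial segments.
  let c : (Fin (n + 1) → V) → Set (ℕ → V) := fun z =>
    {ω | (∀ i : Fin (n + 1), ω i = z i) ∧ ∀ i, z i ∉ S}
  have hunion : {ω : ℕ → V | ∀ i ≤ n, ω i ∉ S} = ⋃ z, c z := by
    ext ω
    simp only [Set.mem_ofPred_eq, Set.mem_iUnion, c]
    constructor
    · intro h
      exact ⟨fun i => ω i, fun _ => rfl, fun i => h i (by omega)⟩
    · rintro ⟨z, hz, hzS⟩ i hi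
      have := hz ⟨i, by omega⟩
      simp only at this
      rw [this]
      exact hzS _
  have hdisj : Pairwise (Function.onFun Disjoint c) := by
    intro z z' hne
    refine Set.disjoint_left.2 fun ω h h' => hne (funext fun i => ?_)
    rw [← h.1 i, h'.1 i]
  have hmeas : ∀ z, MeasurableSet (c z) := by
    intro z
    have hc : c z = (⋂ i : Fin (n + 1), (fun ω : ℕ → V => ω i) ⁻¹' {z i}) ∩
        {_ω | ∀ i, z i ∉ S} := by
      ext ω
      simp [c]
    rw [hc]
    exact (MeasurableSet.iInter fun i : Fin (n + 1) => measurable_pi_apply (i : ℕ)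
      (measurableSet_singleton (z i))).inter (MeasurableSet.const _)
  rw [hunion, measure_iUnion hdisj hmeas, avoidProb_eq_tsum]
  refine tsum_congr fun z => ?_
  by_cases hz : ∀ i, z i ∉ S
  · have hcyl : c z = {ω | ∀ i ≤ n, ω i = z (Fin.ofNat (n + 1) i)} := by
      ext ω
      simp only [c, Set.mem_ofPred_eq]
      constructor
      · rintro ⟨h, -⟩ i hi
        rw [← h, Fin.val_ofNat, Nat.mod_eq_of_lt (by omega)]
      · intro h
        refine ⟨fun i => ?_, hz⟩
        rw [h i (by omega)]
        congr 1
        ext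
        simp
    rw [hcyl, hP.2 v n (fun i => z (Fin.ofNat (n + 1) i)), Finset.prod_range]
    simp only [pathWeight, hz, not_false_eq_true, implies_true, and_true]
    congr 1
    refine Finset.prod_congr rfl fun i _ => ?_
    congr 2 <;> ext <;> simp [Nat.mod_eq_of_lt]
  · have : c z = ∅ := by
      ext ω
      simp only [c, Set.mem_ofPred_eq, Set.mem_empty_iff_false, iff_false]
      exact fun h => hz h.2
    simp [this, pathWeight, hz]

/-- The mean-value property passes to absolute values as an inequality. -/
lemma ofReal_abs_le_tsum {G : SimpleGraph V} (hlf : ∀ v, (G.neighborSet v).Finite)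
    {g : V → ℝ} (hg : Harmonic G g) (v : V) (hv : (G.neighborSet v).Nonempty) :
    ENNReal.ofReal |g v| ≤ ∑' w, stepProb G v w * ENNReal.ofReal |g w| := by
  have hmem : ∀ w, w ∈ (hlf v).toFinset ↔ G.Adj v w := by simp
  have hd : 0 < (G.neighborSet v).ncard := (Set.ncard_pos (hlf v)).2 hv
  have hd' : (0 : ℝ) < (G.neighborSet v).ncard := by exact_mod_cast hd
  rw [tsum_eq_sum (s := (hlf v).toFinset) (by
    intro w hw
    rw [hmem] at hw
    simp [stepProb, hw])]
  have h1 := hg v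
  rw [finsum_mem_eq_finite_toFinset_sum _ (hlf v)] at h1
  have h2 : |g v| ≤
      ∑ w ∈ (hlf v).toFinset, ((G.neighborSet v).ncard : ℝ)⁻¹ * |g w| := by
    rw [← Finset.mul_sum, le_inv_mul_iff₀ hd']
    calc _ = |((G.neighborSet v).ncard : ℝ) * g v| := by rw [abs_mul, abs_of_pos hd']
      _ ≤ _ := by rw [h1]; exact Finset.abs_sum_le_sum_abs _ _
  refine (ENNReal.ofReal_le_ofReal h2).trans ?_
  rw [ENNReal.ofReal_sum_of_nonneg (fun w _ => by positivity)]
  refine Finset.sum_le_sum fun w hw => ?_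
  rw [hmem] at hw
  rw [stepProb, if_pos hw, ENNReal.ofReal_mul (by positivity), ENNReal.ofReal_inv_of_pos hd',
    ENNReal.ofReal_natCast]

/-- Finite-time maximum principle: a harmonic function vanishing on `S` and bounded by `C` is at
most `C` times the probability of not having met `S` yet. -/
lemma ofReal_abs_le_avoidProb {G : SimpleGraph V} (hlf : ∀ v, (G.neighborSet v).Finite)
    (hne : ∀ v, (G.neighborSet v).Nonempty) {g : V → ℝ} (hg : Harmonic G g) {S : Set V}
    (hS : ∀ s ∈ S, g s = 0) {C : ENNReal} (hC : ∀ v, ENNReal.ofReal |g v| ≤ C)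
    (n : ℕ) (v : V) : ENNReal.ofReal |g v| ≤ C * avoidProb G S n v := by
  induction n generalizing v with
  | zero =>
    by_cases hv : v ∈ S
    · simp [hS v hv]
    · simpa [avoidProb, hv] using hC v
  | succ n ih =>
    by_cases hv : v ∈ S
    · simp [hS v hv]
    · simp only [avoidProb, hv, if_false]
      rw [← ENNReal.tsum_mul_left]
      refine (ofReal_abs_le_tsum hlf hg v (hne v)).trans (ENNReal.tsum_le_tsum fun w => ?_)
      rw [mul_left_comm]
      gcongr
      exact ih w

lemma Harmonic.comp_sub {G : SimpleGraph V} (hlf : ∀ v, (G.neighborSet v).Finite)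
    (φ : V ≃ V) (hφ : ∀ u w : V, G.Adj (φ u) (φ w) ↔ G.Adj u w) {h : V → ℝ}
    (hh : Harmonic G h) : Harmonic G (fun v => h (φ v) - h v) := by
  intro v
  have himg : G.neighborSet (φ v) = φ '' G.neighborSet v := by
    ext w
    obtain ⟨u, rfl⟩ := φ.surjective w
    simp [hφ]
  have h1 := hh (φ v)
  rw [himg, Set.ncard_image_of_injective _ φ.injective,
    finsum_mem_image φ.injective.injOn] at h1
  rw [mul_sub, h1, hh v, finsum_mem_sub_distrib _ _ (hlf v)]

theorem bounded_harmonic_invariant_under_automorphism_fixing_S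
    {V : Type} [m : MeasurableSpace V] (hm : m = ⊤)
    (G : SimpleGraph V) (hconn : G.Connected)
    (hlf : ∀ v, (G.neighborSet v).Finite)
    (P : V → Measure (ℕ → V)) (hP : IsSRWLaw G P)
    (φ : V ≃ V) (hφ : ∀ u w : V, G.Adj (φ u) (φ w) ↔ G.Adj u w)
    (S : Set V) (hfix : ∀ s ∈ S, φ s = s)
    (hvisit : ∀ v : V, P v {ω | ∃ n, ω n ∈ S} = 1)
    (h : V → ℝ) (hh : Harmonic G h) (hb : ∃ M : ℝ, ∀ v, |h v| ≤ M) :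
    ∀ v : V, h (φ v) = h v := by
  have hall : ∀ T : Set V, MeasurableSet T := fun T => hm ▸ MeasurableSpace.measurableSet_top
  have : MeasurableSingletonClass V := ⟨fun x => hall {x}⟩
  have := countable_of_connected hconn hlf
  intro v
  rcases subsingleton_or_nontrivial V with hsub | hnt
  · rw [Subsingleton.elim (φ v) v]
  have hne : ∀ u, (G.neighborSet u).Nonempty := fun u =>
    hconn.preconnected.exists_adj_of_nontrivial u
  obtain ⟨M, hM⟩ := hb
  have hbound : ∀ n, ENNReal.ofReal |h (φ v) - h v| ≤
      ENNReal.ofReal (M + M) * P v {ω | ∀ i ≤ n, ω i ∉ S} := by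
    intro n
    rw [measure_avoid hP]
    refine ofReal_abs_le_avoidProb hlf hne (hh.comp_sub hlf φ hφ)
      (fun s hs => by simp [hfix s hs]) (fun u => ENNReal.ofReal_le_ofReal ?_) n v
    exact (abs_sub _ _).trans (add_le_add (hM _) (hM _))
  have := hP.1 v
  have hcoord : ∀ i : ℕ, MeasurableSet {ω : ℕ → V | ω i ∈ S} := fun i =>
    measurable_pi_apply i (hall S)
  have hlim : Tendsto (fun n => P v {ω | ∀ i ≤ n, ω i ∉ S}) atTop (nhds 0) := by
    have hInter : (⋂ n : ℕ, {ω : ℕ → V | ∀ i ≤ n, ω i ∉ S}) = {ω | ∃ n, ω n ∈ S}ᶜ := by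
      ext ω
      simp only [Set.mem_iInter, Set.mem_ofPred_eq, Set.mem_compl_iff, not_exists]
      exact ⟨fun h n => h n n le_rfl, fun h n i _ => h i⟩
    have hzero : P v (⋂ n : ℕ, {ω : ℕ → V | ∀ i ≤ n, ω i ∉ S}) = 0 := by
      rw [hInter, prob_compl_eq_zero_iff]
      · exact hvisit v
      · rw [Set.ofPred_exists]
        exact MeasurableSet.iUnion hcoord
    rw [← hzero]
    refine tendsto_measure_iInter_atTop (fun n => ?_) (fun n k hnk ω h i hi => h i (hi.trans hnk))
      ⟨0, measure_ne_top _ _⟩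
    refine MeasurableSet.nullMeasurableSet ?_
    simp only [Set.ofPred_forall]
    exact MeasurableSet.iInter fun i => MeasurableSet.iInter fun _ => (hcoord i).compl
  have hle : ENNReal.ofReal |h (φ v) - h v| ≤ 0 := by
    refine ge_of_tendsto' (x := atTop) ?_ hbound
    simpa using ENNReal.Tendsto.const_mul hlim (Or.inr ENNReal.ofReal_ne_top)
  rw [nonpos_iff_eq_zero, ENNReal.ofReal_eq_zero] at hle
  exact sub_eq_zero.1 (abs_nonpos_iff.1 hle)

end Paper
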